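/- If X is a Tychonoff space and C_p(X) is an Ascoli space, then C_p(X) is κ-Fréchet–Urysohn. -/

import Mathlib

open Topology Filter

/-- `Cp X` : continuous real-valued functions on `X` with the topology of
pointwise convergence. -/
abbrev Cp (X : Type*) [TopologicalSpace X] : Type _ := {f : X → ℝ // Continuous f}

/-- A space `Y` is Ascoli if every compact subset `K` of `C(Y, ℝ)` (compact-open
topology) is evenly continuous. -/
def IsAscoli (Y : Type*) [TopologicalSpace Y] : Prop :=
  ∀ K : Set C(Y, ℝ), IsCompact K → Continuous fun p : Y × K => (p.2 : C(Y, ℝ)) p.1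

/-- A space is κ-Fréchet–Urysohn if every point in the closure of an open set is
the limit of a sequence from that set. -/
def KappaFrechetUrysohn (Z : Type*) [TopologicalSpace Z] : Prop :=
  ∀ U : Set Z, IsOpen U → ∀ z ∈ closure U,
    ∃ s : ℕ → Z, (∀ n, s n ∈ U) ∧ Filter.Tendsto s Filter.atTop (nhds z)

/-!
If continuous functions `φ n` tend to `0` uniformly on compact sets of a sequentially Ascoli space,
they cannot reach the value `1` arbitrarily close to a given point infinitely often. For disjoint
finite sets `F n ⊆ X`, the functions `φ n f = ∏ x ∈ F n, (f x - n)⁺` on `Cp X` do reach `1`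
arbitrarily close to the zero function, so some compact `K ⊆ Cp X` contains, for infinitely many
`n`, a function `g n` exceeding `n` on `F n`. Since `K` is pointwise bounded, the open sets
`{g n > n} ⊇ F n` are point-finite: `X` has property (κ).

Now let `z` lie in the closure of an open `U ⊆ Cp X`. Choose recursively `f n ∈ U` close to `z` on
a finite set `S n`, membership in `U` being guaranteed by the values on a finite set `E n`, and let
`S (n + 1) = S n ∪ E n`. The sets `E n \ S n` are disjoint, so along a subsequence they have
point-finite open neighbourhoods. Pulling `f n` back to within a small distance of `z` off the
`n`-th neighbourhood, without changing it on `E n`, keeps it in `U` and forces convergence to `z`.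
-/

/-- `Y` is sequentially Ascoli if every convergent sequence in `C(Y, ℝ)` (compact-open topology)
is equicontinuous: the form in which the Ascoli property applies to a sequence of test functions. -/
def IsSequentiallyAscoli (Y : Type*) [TopologicalSpace Y] : Prop :=
  ∀ (φ : ℕ → C(Y, ℝ)) (g : C(Y, ℝ)), Tendsto φ atTop (𝓝 g) → Equicontinuous fun n => ⇑(φ n)

/-- Sakai's property (κ), which characterizes the Tychonoff spaces `X` with `Cp X`
κ-Fréchet–Urysohn: every disjoint sequence of finite sets has a subsequence that expands to a
point-finite sequence of open sets. -/
def HasPropertyKappa (X : Type*) [TopologicalSpace X] : Prop :=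
  ∀ F : ℕ → Finset X, Pairwise (Function.onFun Disjoint F) →
    ∃ k : ℕ → ℕ, StrictMono k ∧ ∃ U : ℕ → Set X,
      (∀ n, IsOpen (U n)) ∧ (∀ n, (F (k n) : Set X) ⊆ U n) ∧ ∀ x, {n | x ∈ U n}.Finite

section Ascoli

variable {Y : Type*} [TopologicalSpace Y]

theorem IsAscoli.isSequentiallyAscoli (hY : IsAscoli Y) : IsSequentiallyAscoli Y := by
  intro φ g hφ y u hu
  let K : Set C(Y, ℝ) := insert g (Set.range φ)
  have hK : IsCompact K := hφ.isCompact_insert_range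
  have : CompactSpace K := isCompact_iff_compactSpace.1 hK
  obtain ⟨V, hV, hVu⟩ := isCompact_univ.mem_uniformity_of_prod
    (f := fun (y : Y) (h : K) => (h : C(Y, ℝ)) y) (hY K hK).continuousOn (Set.mem_univ y)
    (UniformSpace.symm hu)
  rw [nhdsWithin_univ] at hV
  filter_upwards [hV] with v hv n
  exact hVu v hv ⟨φ n, Set.mem_insert_of_mem _ ⟨n, rfl⟩⟩ (Set.mem_univ _)

theorem tendsto_of_forall_isCompact_eventually_eqOn {ι Z : Type*} [UniformSpace Z] {l : Filter ι}
    {φ : ι → C(Y, Z)} {g : C(Y, Z)}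
    (hφ : ∀ K : Set Y, IsCompact K → ∀ᶠ i in l, Set.EqOn (φ i) g K) : Tendsto φ l (𝓝 g) := by
  rw [ContinuousMap.tendsto_iff_forall_isCompact_tendstoUniformlyOn]
  intro K hK u hu
  filter_upwards [hφ K hK] with i hi y hy
  rw [hi hy]
  exact refl_mem_uniformity hu

theorem IsSequentiallyAscoli.exists_isCompact_frequently_ne_zero (hY : IsSequentiallyAscoli Y)
    {φ : ℕ → C(Y, ℝ)} {y : Y} (hφ : ∀ V ∈ 𝓝 y, ∃ᶠ n in atTop, ∃ v ∈ V, 1 ≤ φ n v) :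
    ∃ K : Set Y, IsCompact K ∧ ∃ᶠ n in atTop, ∃ v ∈ K, φ n v ≠ 0 := by
  by_contra! hzero
  have hlim : Tendsto φ atTop (𝓝 0) := tendsto_of_forall_isCompact_eventually_eqOn hzero
  have hnear : ∀ᶠ v in 𝓝 y, ∀ n, dist (φ n y) (φ n v) < 1 :=
    Metric.equicontinuousAt_iff_right.1 (hY φ 0 hlim y) 1 one_pos
  have hy : ∀ᶠ n in atTop, φ n y = 0 :=
    (hzero {y} isCompact_singleton).mono fun n hn => hn y rfl
  obtain ⟨n, ⟨v, hv, hone⟩, hn⟩ := ((hφ _ hnear).and_eventually hy).exists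
  have hlt := hv n
  rw [hn, dist_zero_left, Real.norm_eq_abs] at hlt
  exact (hone.trans (le_abs_self _)).not_gt hlt

end Ascoli

theorem finite_setOf_mem_of_pairwise_disjoint {ι α : Type*} {F : ι → Finset α}
    (hF : Pairwise (Function.onFun Disjoint F)) (a : α) : {i | a ∈ F i}.Finite :=
  Set.Subsingleton.finite fun _ hi _ hj => hF.eq fun hij => Finset.disjoint_left.1 hij hi hj

theorem eventually_atTop_not_of_finite_setOf {p : ℕ → Prop} (hp : {n | p n}.Finite) :
    ∀ᶠ n in atTop, ¬ p n :=
  not_frequently.1 fun h => Nat.frequently_atTop_iff_infinite.1 h hp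

theorem exists_seq_pairwise_disjoint_sdiff {α : Type*} [DecidableEq α]
    (E : ℕ → Finset α → Finset α) :
    ∃ S : ℕ → Finset α, Pairwise (Function.onFun Disjoint fun n => E n (S n) \ S n) := by
  let S : ℕ → Finset α := Nat.rec ∅ fun n T => T ∪ E n T
  have hmono : Monotone S := monotone_nat_of_le_succ fun n => Finset.subset_union_left
  refine ⟨S, (pairwise_disjoint_on _).2 fun m n hmn => ?_⟩
  have hsub : E m (S m) \ S m ⊆ S n :=
    Finset.sdiff_subset.trans (Finset.subset_union_right.trans (hmono hmn))
  exact Finset.disjoint_sdiff.mono_left hsub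

section Functions

variable {X : Type*} [TopologicalSpace X]

theorem exists_continuous_one_on_finset_zero_on_isClosed [CompletelyRegularSpace X] (F : Finset X)
    {C : Set X} (hC : IsClosed C) (hFC : Disjoint (F : Set X) C) :
    ∃ f : X → ℝ, Continuous f ∧ Set.EqOn f 1 F ∧ Set.EqOn f 0 C := by
  have hsep : ∀ p ∈ F, ∃ f : X → unitInterval, Continuous f ∧ f p = 0 ∧ Set.EqOn f 1 C :=
    fun p hp => CompletelyRegularSpace.completely_regular p C hC (Set.disjoint_left.1 hFC hp)
  choose! f hf hfp hfC using hsep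
  refine ⟨fun x => 1 - ∏ p ∈ F, (f p x : ℝ), ?_, fun x hx => ?_, fun x hx => ?_⟩
  · exact continuous_const.sub
      (continuous_finsetProd F fun p hp => continuous_subtype_val.comp (hf p hp))
  · have : ∏ p ∈ F, (f p x : ℝ) = 0 := Finset.prod_eq_zero hx (by simp [hfp x hx])
    simp [this]
  · have : ∏ p ∈ F, (f p x : ℝ) = 1 := Finset.prod_eq_one fun p hp => by simp [hfC p hp hx]
    simp [this]

theorem exists_continuous_eq_and_abs_sub_le {f z g : X → ℝ} (hf : Continuous f)
    (hz : Continuous z) (hg : Continuous g) {ε : ℝ} (hε : 0 ≤ ε) :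
    ∃ h : X → ℝ, Continuous h ∧ (∀ x, |f x - z x| ≤ ε ∨ g x = 1 → h x = f x) ∧
      ∀ x, g x = 0 → |h x - z x| ≤ ε := by
  let r : X → ℝ := fun x => ε + |g x| * |f x - z x|
  refine ⟨fun x => z x + max (-r x) (min (f x - z x) (r x)), by fun_prop, ?_, ?_⟩
  · intro x hx
    have hr : |f x - z x| ≤ r x := by
      rcases hx with hx | hx
      · exact hx.trans (le_add_of_nonneg_right (by positivity))
      · simpa [r, hx] using hε
    change z x + max (-r x) (min (f x - z x) (r x)) = f x
    rw [min_eq_left (abs_le.1 hr).2, max_eq_right (abs_le.1 hr).1, add_sub_cancel]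
  · intro x hx
    have hr : r x = ε := by simp [r, hx]
    change |z x + max (-r x) (min (f x - z x) (r x)) - z x| ≤ ε
    rw [hr, add_sub_cancel_left]
    exact abs_le.2 ⟨le_max_left _ _, max_le (by linarith) (min_le_right _ _)⟩

end Functions

namespace Cp

variable {X : Type*} [TopologicalSpace X]

theorem continuous_eval (x : X) : Continuous fun f : Cp X => f.1 x :=
  (continuous_apply x).comp continuous_subtype_val

theorem exists_finset_forall_eqOn_mem {f : Cp X} {O : Set (Cp X)} (hO : O ∈ 𝓝 f) :
    ∃ E : Finset X, ∀ g : Cp X, Set.EqOn g.1 f.1 E → g ∈ O := by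
  rw [nhds_subtype_eq_comap, mem_comap] at hO
  obtain ⟨t, ht, htO⟩ := hO
  rw [nhds_pi, mem_pi] at ht
  obtain ⟨I, hI, s, hs, hst⟩ := ht
  refine ⟨hI.toFinset, fun g hg => htO (hst fun x hx => ?_)⟩
  rw [hg (hI.mem_toFinset.2 hx)]
  exact mem_of_mem_nhds (hs x)

theorem eventually_forall_finset_abs_sub_lt (f : Cp X) (S : Finset X) {ε : ℝ} (hε : 0 < ε) :
    ∀ᶠ g : Cp X in 𝓝 f, ∀ x ∈ S, |g.1 x - f.1 x| < ε := by
  rw [eventually_all_finset]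
  exact fun x _ => (continuous_eval x).continuousAt.eventually (eventually_abs_sub_lt _ hε)

/-- The function `f ↦ ∏ x ∈ F, (f x - c)⁺` on `Cp X`, a continuous witness for `f` exceeding `c`
on the finite set `F`. -/
noncomputable def prodPosPartSub (F : Finset X) (c : ℝ) : C(Cp X, ℝ) where
  toFun f := ∏ x ∈ F, (f.1 x - c)⁺
  continuous_toFun := continuous_finsetProd F fun x _ =>
    continuous_posPart.comp ((continuous_eval x).sub continuous_const)

theorem lt_of_prodPosPartSub_ne_zero {F : Finset X} {c : ℝ} {f : Cp X}
    (hf : prodPosPartSub F c f ≠ 0) {x : X} (hx : x ∈ F) : c < f.1 x :=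
  sub_pos.1 (posPart_pos_iff.1
    ((posPart_nonneg _).lt_of_ne' (Finset.prod_ne_zero_iff.1 hf x hx)))

theorem prodPosPartSub_eq_one {F : Finset X} {c : ℝ} {f : Cp X} (hf : ∀ x ∈ F, f.1 x = c + 1) :
    prodPosPartSub F c f = 1 :=
  Finset.prod_eq_one fun x hx => by simp [hf x hx]

theorem eventually_exists_prodPosPartSub_eq_one [T35Space X] {F : ℕ → Finset X}
    (hF : Pairwise (Function.onFun Disjoint F)) (c : ℕ → ℝ) {V : Set (Cp X)}
    (hV : V ∈ 𝓝 ⟨0, continuous_zero⟩) :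
    ∀ᶠ n in atTop, ∃ f ∈ V, prodPosPartSub (F n) (c n) f = 1 := by
  obtain ⟨E, hE⟩ := exists_finset_forall_eqOn_mem hV
  have hdisj : ∀ᶠ n in atTop, ∀ x ∈ E, x ∉ F n :=
    (eventually_all_finset E).2 fun x _ =>
      eventually_atTop_not_of_finite_setOf (finite_setOf_mem_of_pairwise_disjoint hF x)
  filter_upwards [hdisj] with n hn
  obtain ⟨f, hf, hfF, hfE⟩ := exists_continuous_one_on_finset_zero_on_isClosed (F n)
    E.finite_toSet.isClosed (Set.disjoint_right.2 hn)
  refine ⟨⟨fun x => (c n + 1) * f x, continuous_const.mul hf⟩, hE _ fun x hx => ?_,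
    prodPosPartSub_eq_one fun x hx => ?_⟩
  · simp [hfE hx]
  · simp [hfF hx]

theorem finite_setOf_natCast_lt {K : Set (Cp X)} (hK : IsCompact K) {g : ℕ → Cp X}
    (hg : ∀ n, g n ∈ K) {k : ℕ → ℕ} (hk : StrictMono k) (x : X) :
    {n | (k n : ℝ) < (g n).1 x}.Finite := by
  obtain ⟨C, hC⟩ := (hK.image (continuous_eval x)).bddAbove
  refine (Set.finite_Iic ⌊C⌋₊).subset fun n hn => Nat.le_floor ?_
  calc (n : ℝ) ≤ k n := Nat.cast_le.2 (hk.id_le n)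
    _ ≤ (g n).1 x := hn.le
    _ ≤ C := hC ⟨g n, hg n, rfl⟩

theorem hasPropertyKappa_of_isSequentiallyAscoli [T35Space X]
    (hX : IsSequentiallyAscoli (Cp X)) : HasPropertyKappa X := by
  intro F hF
  obtain ⟨K, hK, hfreq⟩ := hX.exists_isCompact_frequently_ne_zero
    (φ := fun n => prodPosPartSub (F n) n) fun V hV =>
      ((eventually_exists_prodPosPartSub_eq_one hF _ hV).mono
        fun n ⟨f, hf, hone⟩ => ⟨f, hf, hone.ge⟩).frequently
  obtain ⟨k, hk, hkK⟩ := extraction_of_frequently_atTop hfreq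
  choose g hgK hg using hkK
  exact ⟨k, hk, fun n => {x | (k n : ℝ) < (g n).1 x},
    fun n => isOpen_lt continuous_const (g n).2,
    fun n x hx => lt_of_prodPosPartSub_ne_zero (hg n) hx,
    fun x => finite_setOf_natCast_lt hK hgK hk x⟩

theorem exists_seq_of_mem_closure [DecidableEq X] {U : Set (Cp X)} (hU : IsOpen U) {z : Cp X}
    (hz : z ∈ closure U) {ε : ℕ → ℝ} (hε : ∀ n, 0 < ε n) :
    ∃ (f : ℕ → Cp X) (S E : ℕ → Finset X), (∀ n, ∀ x ∈ S n, |(f n).1 x - z.1 x| < ε n) ∧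
      (∀ n, ∀ g : Cp X, Set.EqOn g.1 (f n).1 (E n) → g ∈ U) ∧
      Pairwise (Function.onFun Disjoint fun n => E n \ S n) := by
  have happrox : ∀ (n : ℕ) (S : Finset X), ∃ (f : Cp X) (E : Finset X),
      (∀ x ∈ S, |f.1 x - z.1 x| < ε n) ∧ ∀ g : Cp X, Set.EqOn g.1 f.1 E → g ∈ U := by
    intro n S
    obtain ⟨f, hf, hfU⟩ :=
      mem_closure_iff_nhds.1 hz _ (eventually_forall_finset_abs_sub_lt z S (hε n))
    obtain ⟨E, hE⟩ := exists_finset_forall_eqOn_mem (hU.mem_nhds hfU)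
    exact ⟨f, E, hf, hE⟩
  choose f E hf hE using happrox
  obtain ⟨S, hS⟩ := exists_seq_pairwise_disjoint_sdiff E
  exact ⟨fun n => f n (S n), S, fun n => E n (S n), fun n => hf n _, fun n => hE n _, hS⟩

theorem tendsto_of_finite_of_abs_sub_le {s : ℕ → Cp X} {z : Cp X} {U : ℕ → Set X}
    (hU : ∀ x, {n | x ∈ U n}.Finite) {ε : ℕ → ℝ} (hε : Tendsto ε atTop (𝓝 0))
    (hs : ∀ n, ∀ x ∉ U n, |(s n).1 x - z.1 x| ≤ ε n) : Tendsto s atTop (𝓝 z) := by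
  rw [tendsto_subtype_rng, tendsto_pi_nhds]
  intro x
  have hx : ∀ᶠ n in atTop, x ∉ U n := eventually_atTop_not_of_finite_setOf (hU x)
  rw [tendsto_iff_dist_tendsto_zero]
  exact squeeze_zero' (Eventually.of_forall fun _ => dist_nonneg) (hx.mono fun n => hs n x) hε

theorem kappaFrechetUrysohn_of_hasPropertyKappa [CompletelyRegularSpace X]
    (hX : HasPropertyKappa X) : KappaFrechetUrysohn (Cp X) := by
  classical
  intro U hU z hz
  obtain ⟨f, S, E, hfS, hfE, hdisj⟩ :=
    exists_seq_of_mem_closure hU hz fun n => Nat.one_div_pos_of_nat (α := ℝ) (n := n)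
  obtain ⟨k, hk, V, hVo, hFV, hVfin⟩ := hX _ hdisj
  have hbump : ∀ n, ∃ b : X → ℝ, Continuous b ∧ Set.EqOn b 1 ↑(E (k n) \ S (k n)) ∧
      Set.EqOn b 0 (V n)ᶜ := fun n =>
    exists_continuous_one_on_finset_zero_on_isClosed _ (hVo n).isClosed_compl
      (Set.disjoint_compl_right_iff_subset.2 (hFV n))
  choose b hb hbF hbV using hbump
  choose h hh hhf hhz using fun n => exists_continuous_eq_and_abs_sub_le (f (k n)).2 z.2 (hb n)
    (Nat.one_div_pos_of_nat (α := ℝ) (n := k n)).le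
  refine ⟨fun n => ⟨h n, hh n⟩, fun n => hfE (k n) _ fun x hx => hhf n x ?_,
    tendsto_of_finite_of_abs_sub_le hVfin
      (tendsto_one_div_add_atTop_nhds_zero_nat.comp hk.tendsto_atTop)
      fun n x hx => hhz n x (hbV n hx)⟩
  by_cases hxS : x ∈ S (k n)
  · exact Or.inl (hfS (k n) x hxS).le
  · exact Or.inr (hbF n (Finset.mem_sdiff.2 ⟨hx, hxS⟩))

end Cp

theorem stmt2_general {X : Type*} [TopologicalSpace X] [T35Space X]
    (hX : IsSequentiallyAscoli (Cp X)) : KappaFrechetUrysohn (Cp X) :=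
  Cp.kappaFrechetUrysohn_of_hasPropertyKappa (Cp.hasPropertyKappa_of_isSequentiallyAscoli hX)

theorem stmt2 {X : Type*} [TopologicalSpace X] [T35Space X]
    (hAscoli : IsAscoli (Cp X)) : KappaFrechetUrysohn (Cp X) :=
  stmt2_general hAscoli.isSequentiallyAscoli
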